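/- arXiv:2312.13488 — 4 statements merged into one kernel-verified Lean document; each statement's English description precedes it below -/
import Mathlib

section
/- Let n ≥ k and let V be a real inner product space of finite dimension k. The inclusion of the subspace P = {A : EuclideanSpace ℝ (Fin n) →L V | A ∘ A† = id_V} into the subspace F = {A : EuclideanSpace ℝ (Fin n) →L V | A is surjective} (both with the topology induced from the operator-norm topology on continuous linear maps) is a homotopy equivalence of topological spaces. -/
/-!
Fix an orthonormal basis `b` of `V`. A map `A : E → V` is the same thing as the family of its rows
`A† bᵢ` in `E`: it is surjective iff the rows are linearly independent, and Parseval iff they are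
orthonormal. The (normalized) Gram-Schmidt process on the rows depends continuously on `A`, turns
independent rows into orthonormal ones, and fixes orthonormal rows, so it is a retraction of the
space of frames onto the space of Parseval frames (`continuous_gramSchmidtNormed`,
`parseval_synthesis`, `gramSchmidtNormed_of_orthonormal`).

The straight-line homotopy from this retraction to the identity stays among the frames: if `f` are
the rows of a frame and `g` is their Gram-Schmidt orthogonalization, then the matrix of inner
products of `t f + (1 - t) g / ‖g‖` with `g` is triangular with positive diagonal, hence invertible
(`surjective_synthesis_segment`).
-/

open InnerProductSpace in
/-- The Gram-Schmidt process depends continuously on a parameter as long as the input family stays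
linearly independent, since it then never divides by zero. -/
lemma continuous_gramSchmidt {X E : Type*} [TopologicalSpace X] [NormedAddCommGroup E]
    [InnerProductSpace ℝ E] {m : ℕ} {f : X → Fin m → E} (hf : ∀ i, Continuous fun x => f x i)
    (hli : ∀ x, LinearIndependent ℝ (f x)) (i : Fin m) :
    Continuous fun x => gramSchmidt ℝ (f x) i := by
  induction i using WellFoundedLT.induction with
  | ind i ih =>
    simp_rw [gramSchmidt_def ℝ _ i, Submodule.starProjection_singleton]
    refine (hf i).sub (continuous_finsetSum _ fun j hj => ?_)
    have hj' := ih j (Finset.mem_Iio.1 hj)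
    refine Continuous.smul (Continuous.div (hj'.inner (hf i)) ?_ fun x => ?_) hj'
    · exact RCLike.continuous_ofReal.comp (hj'.norm.pow 2)
    · simpa using gramSchmidt_ne_zero j (hli x)

open InnerProductSpace in
lemma continuous_gramSchmidtNormed {X E : Type*} [TopologicalSpace X] [NormedAddCommGroup E]
    [InnerProductSpace ℝ E] {m : ℕ} {f : X → Fin m → E} (hf : ∀ i, Continuous fun x => f x i)
    (hli : ∀ x, LinearIndependent ℝ (f x)) (i : Fin m) :
    Continuous fun x => gramSchmidtNormed ℝ (f x) i := by
  have h := continuous_gramSchmidt hf hli i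
  unfold gramSchmidtNormed
  refine Continuous.smul (Continuous.inv₀ (RCLike.continuous_ofReal.comp h.norm) fun x => ?_) h
  simpa using gramSchmidt_ne_zero i (hli x)

open InnerProductSpace in
lemma gramSchmidtNormed_of_orthonormal {E : Type*} [NormedAddCommGroup E]
    [InnerProductSpace ℝ E] {m : ℕ} {f : Fin m → E} (hf : Orthonormal ℝ f) :
    gramSchmidtNormed ℝ f = f := by
  funext i
  rw [gramSchmidtNormed, gramSchmidt_of_orthogonal ℝ (fun _ _ h => hf.2 h), hf.1 i]
  simp

section Synthesis

variable {E V : Type*} [NormedAddCommGroup E] [InnerProductSpace ℝ E] [CompleteSpace E]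
  [NormedAddCommGroup V] [InnerProductSpace ℝ V] [FiniteDimensional ℝ V] {m : ℕ}

/-- The map `x ↦ ∑ i, ⟪vᵢ, x⟫ bᵢ`, i.e. the linear map whose rows in the orthonormal basis `b`
are the vectors `vᵢ`. -/
noncomputable def synthesis (b : OrthonormalBasis (Fin m) ℝ V) (v : Fin m → E) : E →L[ℝ] V :=
  ∑ i, (innerSL ℝ (v i)).smulRight (b i)

omit [CompleteSpace E] [FiniteDimensional ℝ V] in
lemma synthesis_apply (b : OrthonormalBasis (Fin m) ℝ V) (v : Fin m → E) (x : E) :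
    synthesis b v x = ∑ i, inner ℝ (v i) x • b i := by
  simp [synthesis]

omit [CompleteSpace E] [FiniteDimensional ℝ V] in
lemma inner_synthesis (b : OrthonormalBasis (Fin m) ℝ V) (v : Fin m → E) (x : E) (i : Fin m) :
    inner ℝ (b i) (synthesis b v x) = inner ℝ (v i) x := by
  rw [synthesis_apply, b.orthonormal.inner_right_fintype]

lemma adjoint_synthesis (b : OrthonormalBasis (Fin m) ℝ V) (v : Fin m → E) (i : Fin m) :
    ContinuousLinearMap.adjoint (synthesis b v) (b i) = v i := by
  refine ext_inner_right ℝ fun x => ?_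
  rw [ContinuousLinearMap.adjoint_inner_left, inner_synthesis]

/-- The rows of `A` in the basis `b`. -/
noncomputable def rows (b : OrthonormalBasis (Fin m) ℝ V) (A : E →L[ℝ] V) (i : Fin m) : E :=
  ContinuousLinearMap.adjoint A (b i)

lemma synthesis_rows (b : OrthonormalBasis (Fin m) ℝ V) (A : E →L[ℝ] V) :
    synthesis b (rows b A) = A := by
  ext x
  simp only [synthesis_apply, rows, ContinuousLinearMap.adjoint_inner_left]
  exact b.sum_repr' (A x)

omit [CompleteSpace E] [FiniteDimensional ℝ V] in
lemma continuous_synthesis {X : Type*} [TopologicalSpace X] (b : OrthonormalBasis (Fin m) ℝ V)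
    {v : X → Fin m → E} (hv : ∀ i, Continuous fun x => v x i) :
    Continuous fun x => synthesis b (v x) := by
  unfold synthesis
  refine continuous_finsetSum _ fun i _ => ?_
  have h : Continuous fun x => innerSL ℝ (v x i) := (innerSL ℝ).continuous.comp (hv i)
  exact ((ContinuousLinearMap.smulRightL ℝ E V).flip (b i)).continuous.comp h

lemma continuous_rows (b : OrthonormalBasis (Fin m) ℝ V) (i : Fin m) :
    Continuous fun A : E →L[ℝ] V => rows b A i :=
  (ContinuousLinearMap.adjoint (𝕜 := ℝ) (E := E) (F := V)).continuous.clm_apply continuous_const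

lemma linearIndependent_rows (b : OrthonormalBasis (Fin m) ℝ V) {A : E →L[ℝ] V}
    (hA : Function.Surjective A) : LinearIndependent ℝ (rows b A) := by
  have hker : LinearMap.ker (ContinuousLinearMap.adjoint A : V →ₗ[ℝ] E) = ⊥ := by
    rw [LinearMap.ker_eq_bot']
    intro y hy
    obtain ⟨x, rfl⟩ := hA y
    have h : inner ℝ (ContinuousLinearMap.adjoint A (A x)) x = inner ℝ (A x) (A x) :=
      ContinuousLinearMap.adjoint_inner_left A x (A x)
    have hy' : ContinuousLinearMap.adjoint A (A x) = 0 := hy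
    rw [hy', inner_zero_left] at h
    exact inner_self_eq_zero.1 h.symm
  exact b.orthonormal.linearIndependent.map' _ hker

lemma parseval_synthesis (b : OrthonormalBasis (Fin m) ℝ V) {v : Fin m → E}
    (hv : Orthonormal ℝ v) :
    synthesis b v ∘L ContinuousLinearMap.adjoint (synthesis b v) = ContinuousLinearMap.id ℝ V := by
  apply ContinuousLinearMap.coe_injective
  refine b.toBasis.ext fun j => ?_
  simp only [OrthonormalBasis.coe_toBasis, ContinuousLinearMap.coe_coe,
    ContinuousLinearMap.comp_apply, adjoint_synthesis, synthesis_apply,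
    ContinuousLinearMap.id_apply]
  simp [orthonormal_iff_ite.1 hv]

lemma orthonormal_rows (b : OrthonormalBasis (Fin m) ℝ V) {A : E →L[ℝ] V}
    (hA : A ∘L ContinuousLinearMap.adjoint A = ContinuousLinearMap.id ℝ V) :
    Orthonormal ℝ (rows b A) := by
  rw [orthonormal_iff_ite]
  intro i j
  have h : A (ContinuousLinearMap.adjoint A (b j)) = b j := DFunLike.congr_fun hA (b j)
  rw [rows, rows, ContinuousLinearMap.adjoint_inner_left, h]
  exact orthonormal_iff_ite.1 b.orthonormal i j

lemma surjective_of_parseval {A : E →L[ℝ] V}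
    (hA : A ∘L ContinuousLinearMap.adjoint A = ContinuousLinearMap.id ℝ V) :
    Function.Surjective A :=
  fun y => ⟨ContinuousLinearMap.adjoint A y, DFunLike.congr_fun hA y⟩

omit [CompleteSpace E] [FiniteDimensional ℝ V] in
/-- A map is surjective as soon as the matrix of inner products of its rows with some family `g` is
invertible: every vector of `V` is then reached from the span of `g`. -/
lemma surjective_synthesis_of_det_ne_zero (b : OrthonormalBasis (Fin m) ℝ V) (v g : Fin m → E)
    (h : (Matrix.of fun i j => inner ℝ (v i) (g j)).det ≠ 0) :
    Function.Surjective (synthesis b v) := by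
  intro y
  obtain ⟨c, hc⟩ := Matrix.mulVec_surjective_iff_isUnit.2
    ((Matrix.isUnit_iff_isUnit_det _).2 (isUnit_iff_ne_zero.2 h)) fun i => inner ℝ (b i) y
  refine ⟨∑ j, c j • g j, b.repr.injective (PiLp.ext fun i => ?_)⟩
  rw [b.repr_apply_apply, b.repr_apply_apply, inner_synthesis, inner_sum, ← congrFun hc i]
  simp [Matrix.mulVec, dotProduct, inner_smul_right, mul_comm]

open InnerProductSpace in
omit [CompleteSpace E] [FiniteDimensional ℝ V] in
/-- The segment joining the Gram-Schmidt orthonormalization of a linearly independent family to the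
family itself consists of rows of surjective maps. -/
lemma surjective_synthesis_segment (b : OrthonormalBasis (Fin m) ℝ V) {f : Fin m → E}
    (hf : LinearIndependent ℝ f) {t : ℝ} (ht0 : 0 ≤ t) (ht1 : t ≤ 1) :
    Function.Surjective
      (synthesis b fun i => t • f i + (1 - t) • gramSchmidtNormed ℝ f i) := by
  have hdiag (i : Fin m) : inner ℝ (f i) (gramSchmidt ℝ f i) = ‖gramSchmidt ℝ f i‖ ^ 2 := by
    rw [gramSchmidt_def'' ℝ f i, inner_add_left, sum_inner, real_inner_self_eq_norm_sq,
      Finset.sum_eq_zero, add_zero]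
    intro j hj
    rw [inner_smul_left, gramSchmidt_orthogonal ℝ f (Finset.mem_Iio.1 hj).ne, mul_zero]
  apply surjective_synthesis_of_det_ne_zero b _ (gramSchmidt ℝ f)
  rw [Matrix.det_of_isLowerTriangular]
  · refine Finset.prod_ne_zero_iff.2 fun i _ => ne_of_gt ?_
    have hpos : 0 < ‖gramSchmidt ℝ f i‖ := norm_pos_iff.2 (gramSchmidt_ne_zero i hf)
    have hn : inner ℝ (gramSchmidtNormed ℝ f i) (gramSchmidt ℝ f i) = ‖gramSchmidt ℝ f i‖ := by
      rw [gramSchmidtNormed, inner_smul_left, real_inner_self_eq_norm_sq]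
      simp only [RCLike.ofReal_real_eq_id, id_eq, conj_trivial]
      field_simp
    rw [Matrix.of_apply, inner_add_left, inner_smul_left, inner_smul_left, hdiag, hn]
    simp only [conj_trivial]
    rcases ht0.eq_or_lt with rfl | ht
    · simpa using hpos
    · have h1 : 0 ≤ 1 - t := by linarith
      positivity
  · intro i j hij
    have hij' : i < j := hij
    have h1 : inner ℝ (f i) (gramSchmidt ℝ f j) = 0 := by
      rw [real_inner_comm]
      exact gramSchmidt_inv_triangular ℝ f hij'
    rw [Matrix.of_apply, inner_add_left, inner_smul_left, inner_smul_left, h1, gramSchmidtNormed,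
      inner_smul_left, gramSchmidt_orthogonal ℝ f hij'.ne]
    simp

end Synthesis

open InnerProductSpace in
/-- The inclusion of the space of `n`-Parseval frames `{A | A ∘ A† = id}` into the space of
`n`-frames `{A | A surjective}` (with the operator-norm subspace topologies) is a homotopy
equivalence. -/
theorem parseval_inclusion_homotopy_equiv {n k : ℕ} (hnk : k ≤ n) {V : Type*}
    [NormedAddCommGroup V] [InnerProductSpace ℝ V] [FiniteDimensional ℝ V]
    (hV : Module.finrank ℝ V = k) :
    ∃ h : ContinuousMap.HomotopyEquiv
        {A : EuclideanSpace ℝ (Fin n) →L[ℝ] V //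
          A ∘L ContinuousLinearMap.adjoint A = ContinuousLinearMap.id ℝ V}
        {A : EuclideanSpace ℝ (Fin n) →L[ℝ] V // Function.Surjective A},
      ∀ A, ((h.toFun A : {A : EuclideanSpace ℝ (Fin n) →L[ℝ] V // Function.Surjective A}) :
          EuclideanSpace ℝ (Fin n) →L[ℝ] V) = A.1 := by
  let b := stdOrthonormalBasis ℝ V
  have hrows (i) : Continuous fun A : {A : EuclideanSpace ℝ (Fin n) →L[ℝ] V //
      Function.Surjective A} => rows b A.1 i := (continuous_rows b i).comp continuous_subtype_val
  have hGS := continuous_gramSchmidtNormed hrows fun A => linearIndependent_rows b A.2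
  let incl : C({A : EuclideanSpace ℝ (Fin n) →L[ℝ] V //
        A ∘L ContinuousLinearMap.adjoint A = ContinuousLinearMap.id ℝ V},
      {A : EuclideanSpace ℝ (Fin n) →L[ℝ] V // Function.Surjective A}) :=
    ⟨fun A => ⟨A.1, surjective_of_parseval A.2⟩, continuous_subtype_val.subtype_mk _⟩
  let retr : C({A : EuclideanSpace ℝ (Fin n) →L[ℝ] V // Function.Surjective A},
      {A : EuclideanSpace ℝ (Fin n) →L[ℝ] V //
        A ∘L ContinuousLinearMap.adjoint A = ContinuousLinearMap.id ℝ V}) :=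
    ⟨fun A => ⟨synthesis b (gramSchmidtNormed ℝ (rows b A.1)),
        parseval_synthesis b (gramSchmidtNormed_orthonormal (linearIndependent_rows b A.2))⟩,
      (continuous_synthesis b hGS).subtype_mk _⟩
  have hleft : retr.comp incl = ContinuousMap.id _ := by
    ext1 A
    apply Subtype.ext
    change synthesis b (gramSchmidtNormed ℝ (rows b A.1)) = A.1
    rw [gramSchmidtNormed_of_orthonormal (orthonormal_rows b A.2), synthesis_rows]
  let H : (incl.comp retr).Homotopy (ContinuousMap.id _) :=
    { toFun := fun p => ⟨synthesis b fun i => (p.1 : ℝ) • rows b p.2.1 i +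
          (1 - (p.1 : ℝ)) • gramSchmidtNormed ℝ (rows b p.2.1) i,
        surjective_synthesis_segment b (linearIndependent_rows b p.2.2) p.1.2.1 p.1.2.2⟩
      continuous_toFun := by
        refine (continuous_synthesis b fun i => ?_).subtype_mk _
        have ht : Continuous fun p : unitInterval × {A : EuclideanSpace ℝ (Fin n) →L[ℝ] V //
            Function.Surjective A} => (p.1 : ℝ) := continuous_subtype_val.comp continuous_fst
        exact (ht.smul ((hrows i).comp continuous_snd)).add
          ((continuous_const.sub ht).smul ((hGS i).comp continuous_snd))
      map_zero_left := fun A => by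
        apply Subtype.ext
        simp [incl, retr]
      map_one_left := fun A => by
        apply Subtype.ext
        simpa using synthesis_rows b A.1 }
  exact ⟨⟨incl, retr, hleft ▸ ContinuousMap.Homotopic.refl _, ⟨H⟩⟩, fun _ => rfl⟩
end

section
/- Let n ≥ k and let V be a real inner product space of finite dimension k. For any two continuous linear maps A, B : EuclideanSpace ℝ (Fin n) → V satisfying A ∘ A† = id_V and B ∘ B† = id_V, there exist a linear isometric equivalence M : V ≃ V and a linear isometric equivalence N : EuclideanSpace ℝ (Fin n) ≃ EuclideanSpace ℝ (Fin n) such that B = M ∘ A ∘ N⁻¹. In other words, the group O(V) × O(n) acts transitively on the space of n-Parseval frames in V. -/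
/-!
The choice `M = id` suffices. The condition `A A† = 1` says that `A†` is an isometric embedding
of `V`, and likewise for `B†`. Hence `A† v ↦ B† v` is a linear isometry from `range A†` into
`EuclideanSpace ℝ (Fin n)`, and in finite dimension it extends to an orthogonal map `N` of the
whole space (`LinearIsometry.extend`). Taking adjoints in `N A† = B†` gives `A N⁻¹ = B`.
-/

open ContinuousLinearMap in
/-- The adjoint (analysis operator) of a Parseval frame is an isometric embedding. -/
theorem norm_adjoint_of_comp_adjoint_eq_id {E V : Type*}
    [NormedAddCommGroup E] [InnerProductSpace ℝ E] [CompleteSpace E]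
    [NormedAddCommGroup V] [InnerProductSpace ℝ V] [CompleteSpace V]
    (A : E →L[ℝ] V) (hA : A ∘L adjoint A = ContinuousLinearMap.id ℝ V) (v : V) :
    ‖adjoint A v‖ = ‖v‖ := by
  have h : A (adjoint A v) = v := DFunLike.congr_fun hA v
  have h2 : ‖adjoint A v‖ ^ 2 = ‖v‖ ^ 2 := by
    rw [← real_inner_self_eq_norm_sq, ← real_inner_self_eq_norm_sq, adjoint_inner_left, h]
  exact (sq_eq_sq₀ (norm_nonneg _) (norm_nonneg _)).mp h2

/-- The group `O(V) × O(n)` acts transitively on the space of `n`-Parseval frames in `V`: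
any two Parseval frames `A, B` are related by `B = M ∘ A ∘ N⁻¹` for linear isometric
equivalences `M` of `V` and `N` of `EuclideanSpace ℝ (Fin n)`. -/
theorem orthogonal_transitive_on_parseval {n k : ℕ} (hnk : k ≤ n) {V : Type*}
    [NormedAddCommGroup V] [InnerProductSpace ℝ V] [FiniteDimensional ℝ V]
    (hV : Module.finrank ℝ V = k) (A B : EuclideanSpace ℝ (Fin n) →L[ℝ] V)
    (hA : A ∘L ContinuousLinearMap.adjoint A = ContinuousLinearMap.id ℝ V)
    (hB : B ∘L ContinuousLinearMap.adjoint B = ContinuousLinearMap.id ℝ V) :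
    ∃ (M : V ≃ₗᵢ[ℝ] V)
      (N : EuclideanSpace ℝ (Fin n) ≃ₗᵢ[ℝ] EuclideanSpace ℝ (Fin n)),
      ∀ x : EuclideanSpace ℝ (Fin n), B x = M (A (N.symm x)) := by
  have hA' : ∀ v, A (ContinuousLinearMap.adjoint A v) = v := fun v => DFunLike.congr_fun hA v
  -- On `range A†`, the map `B† ∘ A` is the isometry `A† v ↦ B† v`.
  let L : (ContinuousLinearMap.adjoint A).range →ₗᵢ[ℝ] EuclideanSpace ℝ (Fin n) :=
    { toLinearMap := (ContinuousLinearMap.adjoint B ∘L A).toLinearMap.domRestrict _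
      norm_map' := by
        rintro ⟨_, v, rfl⟩
        change ‖ContinuousLinearMap.adjoint B (A (ContinuousLinearMap.adjoint A v))‖
          = ‖ContinuousLinearMap.adjoint A v‖
        rw [hA', norm_adjoint_of_comp_adjoint_eq_id A hA,
          norm_adjoint_of_comp_adjoint_eq_id B hB] }
  let N : EuclideanSpace ℝ (Fin n) ≃ₗᵢ[ℝ] EuclideanSpace ℝ (Fin n) :=
    L.extend.toLinearIsometryEquiv rfl
  have hN : ∀ v, N (ContinuousLinearMap.adjoint A v) = ContinuousLinearMap.adjoint B v := by
    intro v
    refine (L.extend_apply ⟨ContinuousLinearMap.adjoint A v, v, rfl⟩).trans ?_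
    change ContinuousLinearMap.adjoint B (A (ContinuousLinearMap.adjoint A v)) = _
    rw [hA']
  refine ⟨LinearIsometryEquiv.refl ℝ V, N, fun x => ext_inner_right ℝ fun v => ?_⟩
  rw [LinearIsometryEquiv.coe_refl, id, ← ContinuousLinearMap.adjoint_inner_right,
    ← ContinuousLinearMap.adjoint_inner_right, ← hN, ← N.inner_map_map (N.symm x),
    N.apply_symm_apply]
end

section
/- Let n ≥ k and let V be a complex inner product space of finite complex dimension k. For any two continuous linear maps A, B : EuclideanSpace ℂ (Fin n) → V satisfying A ∘ A* = id_V and B ∘ B* = id_V, there exist a complex-linear isometric equivalence M : V ≃ V and a complex-linear isometric equivalence N : EuclideanSpace ℂ (Fin n) ≃ EuclideanSpace ℂ (Fin n) such that B = M ∘ A ∘ N⁻¹. In other words, the group U(V) × U(n) acts transitively on the space of complex n-Parseval frames in V. -/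
/-!
`A A* = id` says exactly that `A* : V → ℂⁿ` is a linear isometry, and likewise for `B*`. Two
isometric embeddings of `V` into `ℂⁿ` differ by a unitary of `ℂⁿ`: the isometry
`A* v ↦ B* v` from the range of `A*` extends to a unitary `N` with `N A* = B*`. Taking adjoints
gives `B = A N* = A N⁻¹`, so `M = id` already suffices.
-/

/-- The adjoint of a Parseval frame, as a linear isometry. -/
noncomputable def parsevalAdjoint {E V : Type*} [NormedAddCommGroup E] [InnerProductSpace ℂ E]
    [CompleteSpace E] [NormedAddCommGroup V] [InnerProductSpace ℂ V] [CompleteSpace V]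
    (A : E →L[ℂ] V)
    (hA : A ∘L ContinuousLinearMap.adjoint A = ContinuousLinearMap.id ℂ V) : V →ₗᵢ[ℂ] E :=
  (ContinuousLinearMap.adjoint A).toLinearMap.isometryOfInner fun v w => by
    have h : A (ContinuousLinearMap.adjoint A w) = w := congrArg (fun T => T w) hA
    simp [ContinuousLinearMap.adjoint_inner_left, h]

/-- Two isometric embeddings of the same space into a finite-dimensional space `E` differ by a
unitary of `E`. -/
lemma exists_unitary_comp_eq {E V : Type*} [NormedAddCommGroup E] [InnerProductSpace ℂ E]
    [FiniteDimensional ℂ E] [NormedAddCommGroup V] [InnerProductSpace ℂ V]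
    (f g : V →ₗᵢ[ℂ] E) : ∃ N : E ≃ₗᵢ[ℂ] E, ∀ v, N (f v) = g v := by
  let L : LinearMap.range f.toLinearMap →ₗᵢ[ℂ] E := g.comp f.equivRange.symm.toLinearIsometry
  refine ⟨L.extend.toLinearIsometryEquiv rfl, fun v => ?_⟩
  have h := L.extend_apply (f.equivRange v)
  simpa [L] using h

/-- The group `U(V) × U(n)` acts transitively on the space of complex `n`-Parseval frames
in `V`: any two complex Parseval frames `A, B` are related by `B = M ∘ A ∘ N⁻¹` for
complex-linear isometric equivalences `M` of `V` and `N` of `EuclideanSpace ℂ (Fin n)`. -/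
theorem unitary_transitive_on_complex_parseval {n k : ℕ} (hnk : k ≤ n) {V : Type*}
    [NormedAddCommGroup V] [InnerProductSpace ℂ V] [FiniteDimensional ℂ V]
    (hV : Module.finrank ℂ V = k) (A B : EuclideanSpace ℂ (Fin n) →L[ℂ] V)
    (hA : A ∘L ContinuousLinearMap.adjoint A = ContinuousLinearMap.id ℂ V)
    (hB : B ∘L ContinuousLinearMap.adjoint B = ContinuousLinearMap.id ℂ V) :
    ∃ (M : V ≃ₗᵢ[ℂ] V)
      (N : EuclideanSpace ℂ (Fin n) ≃ₗᵢ[ℂ] EuclideanSpace ℂ (Fin n)),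
      ∀ x : EuclideanSpace ℂ (Fin n), B x = M (A (N.symm x)) := by
  obtain ⟨N, hN⟩ := exists_unitary_comp_eq (parsevalAdjoint A hA) (parsevalAdjoint B hB)
  have hN' (v : V) : N (ContinuousLinearMap.adjoint A v) = ContinuousLinearMap.adjoint B v := hN v
  refine ⟨LinearIsometryEquiv.refl ℂ V, N, fun x => ext_inner_left ℂ fun v => ?_⟩
  rw [LinearIsometryEquiv.coe_refl, id, ← ContinuousLinearMap.adjoint_inner_left,
    ← ContinuousLinearMap.adjoint_inner_left, ← hN', ← N.inner_map_map _ (N.symm x), N.apply_symm_apply]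
end

section
/- Let n ≥ k ≥ 1 and let V be a real inner product space of finite dimension k. The set of continuous linear maps A : EuclideanSpace ℝ (Fin n) → V such that A is surjective and every eigenspace of the frame operator A ∘ A† has dimension at most 1 (i.e., the k eigenvalues of A ∘ A† are pairwise distinct) is an open and dense subset of the space of all continuous linear maps from EuclideanSpace ℝ (Fin n) to V with the operator-norm topology. -/
/-!
Write `T = A ∘ A†`.

*Openness.* `A` fails to be surjective iff `A† u = 0` for some unit vector `u`, and `T` has an
eigenspace of dimension at least two iff there are orthonormal `u, v` with `T u = μ u` and
`T v = μ v`, where necessarily `μ = ⟪T u, u⟫`. Both conditions are closed in `(A, u, v)`, and the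
unit sphere of `V` is compact, so projecting to `A` gives closed sets of bad maps
(`isOpen_surjective`, `isOpen_simple_spectrum`).

*Density.* By the singular value decomposition (`exists_svd`) there are an orthonormal basis `e` of
`V`, an orthonormal family `f` in the domain and singular values `σ₀ ≥ σ₁ ≥ ⋯ ≥ 0` with
`A x = ∑ i, σ i ⟪f i, x⟫ e i`. Replacing `σ i` by `σ i + t (k - i)` with `t > 0` makes the singular
values positive and strictly decreasing, hence the map surjective with simple spectrum
(`generic_of_svd`), and the perturbed maps tend to `A` as `t → 0`.
-/

open scoped InnerProductSpace Topology
open ContinuousLinearMap (adjoint)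

section GenericFrames

variable {E V : Type*} [NormedAddCommGroup E] [InnerProductSpace ℝ E] [FiniteDimensional ℝ E]
  [NormedAddCommGroup V] [InnerProductSpace ℝ V] [FiniteDimensional ℝ V]

theorem surjective_iff_forall_sphere (A : E →L[ℝ] V) :
    Function.Surjective A ↔ ∀ u : Metric.sphere (0 : V) 1, adjoint A u ≠ 0 := by
  constructor
  · rintro hA ⟨u, hu⟩ h0
    obtain ⟨x, rfl⟩ := hA u
    have h1 : ⟪A x, A x⟫_ℝ = 0 := by
      rw [← ContinuousLinearMap.adjoint_inner_left]
      simp [show adjoint A (A x) = 0 from h0]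
    rw [inner_self_eq_zero] at h1
    simp [h1] at hu
  · intro h
    have hker : (adjoint A).ker = ⊥ := by
      rw [LinearMap.ker_eq_bot']
      intro m hm
      by_contra hne
      refine h ⟨(‖m‖⁻¹ : ℝ) • m, ?_⟩ ?_
      · simp [norm_smul, hne]
      · have hm' : adjoint A m = 0 := hm
        simp [hm']
    have hr := A.orthogonal_range
    rw [hker, Submodule.orthogonal_eq_bot_iff] at hr
    exact LinearMap.range_eq_top.mp hr

theorem isOpen_surjective : IsOpen {A : E →L[ℝ] V | Function.Surjective A} := by
  have hc : IsClosed {p : (E →L[ℝ] V) × Metric.sphere (0 : V) 1 | adjoint p.1 p.2 = 0} := by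
    refine isClosed_eq ?_ continuous_const
    exact ((adjoint (𝕜 := ℝ) (E := E) (F := V)).continuous.comp continuous_fst).clm_apply
      (continuous_subtype_val.comp continuous_snd)
  rw [← isClosed_compl_iff]
  convert isClosedMap_fst_of_compactSpace _ hc using 1
  ext A
  simp only [Set.mem_compl_iff, Set.mem_ofPred_eq, surjective_iff_forall_sphere, Set.mem_image,
    Prod.exists, exists_and_right, exists_eq_right]
  push Not
  rfl

/-- The eigenvalue shared by `u` and `v` is eliminated in favour of the Rayleigh quotient
`⟪T u, u⟫`, so that the existential ranges over a compact set only. -/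
theorem simple_spectrum_iff (T : V →L[ℝ] V) :
    (∀ μ : ℝ, Module.finrank ℝ (Module.End.eigenspace (T : V →ₗ[ℝ] V) μ) ≤ 1) ↔
      ¬ ∃ q : Metric.sphere (0 : V) 1 × Metric.sphere (0 : V) 1,
        ⟪(q.1 : V), (q.2 : V)⟫_ℝ = 0 ∧ T q.1 = ⟪T q.1, (q.1 : V)⟫_ℝ • (q.1 : V) ∧
          T q.2 = ⟪T q.1, (q.1 : V)⟫_ℝ • (q.2 : V) := by
  constructor
  · rintro h ⟨⟨⟨u, hu⟩, ⟨v, hv⟩⟩, huv, hTu, hTv⟩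
    dsimp only at huv hTu hTv
    have hμ := h ⟪T u, u⟫_ℝ
    rw [finrank_le_one_iff] at hμ
    obtain ⟨w, hw⟩ := hμ
    obtain ⟨c, hc⟩ := hw ⟨u, Module.End.mem_eigenspace_iff.mpr hTu⟩
    obtain ⟨d, hd⟩ := hw ⟨v, Module.End.mem_eigenspace_iff.mpr hTv⟩
    have hc' : c • (w : V) = u := congrArg Subtype.val hc
    have hd' : d • (w : V) = v := congrArg Subtype.val hd
    rw [← hc', ← hd', inner_smul_left, inner_smul_right] at huv
    simp only [conj_trivial, mul_eq_zero, inner_self_eq_zero] at huv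
    rcases huv with h0 | h0 | h0
    · simp [← hc', h0] at hu
    · simp [← hd', h0] at hv
    · simp [← hc', h0] at hu
  · intro h μ
    by_contra! hlt
    apply h
    set S := Module.End.eigenspace (T : V →ₗ[ℝ] V) μ with hS
    let b := stdOrthonormalBasis ℝ S
    let u := b ⟨0, by omega⟩
    let v := b ⟨1, hlt⟩
    have hTS : ∀ x : S, T x = μ • (x : V) := fun x => Module.End.mem_eigenspace_iff.mp x.2
    have hu : ‖(u : V)‖ = 1 := b.orthonormal.1 _
    have hv : ‖(v : V)‖ = 1 := b.orthonormal.1 _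
    have huv : ⟪(u : V), (v : V)⟫_ℝ = 0 := b.orthonormal.2 (by simp)
    have hR : ⟪T u, (u : V)⟫_ℝ = μ := by
      rw [hTS, inner_smul_left, real_inner_self_eq_norm_sq, hu]; simp
    refine ⟨⟨⟨u, by simpa using hu⟩, ⟨v, by simpa using hv⟩⟩, huv, ?_, ?_⟩
    · simp only [hR]
      exact hTS u
    · simp only [hR]
      exact hTS v

theorem isOpen_simple_spectrum :
    IsOpen {T : V →L[ℝ] V |
      ∀ μ : ℝ, Module.finrank ℝ (Module.End.eigenspace (T : V →ₗ[ℝ] V) μ) ≤ 1} := by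
  have hc : IsClosed {p : (V →L[ℝ] V) × (Metric.sphere (0 : V) 1 × Metric.sphere (0 : V) 1) |
      ⟪(p.2.1 : V), (p.2.2 : V)⟫_ℝ = 0 ∧ p.1 p.2.1 = ⟪p.1 p.2.1, (p.2.1 : V)⟫_ℝ • (p.2.1 : V) ∧
        p.1 p.2.2 = ⟪p.1 p.2.1, (p.2.1 : V)⟫_ℝ • (p.2.2 : V)} := by
    refine (isClosed_eq ?_ ?_).and ((isClosed_eq ?_ ?_).and (isClosed_eq ?_ ?_)) <;> fun_prop
  rw [← isClosed_compl_iff]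
  convert isClosedMap_fst_of_compactSpace _ hc using 1
  ext T
  simp only [Set.mem_compl_iff, Set.mem_ofPred_eq, simple_spectrum_iff, not_not, Set.mem_image]
  constructor
  · rintro ⟨q, hq⟩
    exact ⟨(T, q), hq, rfl⟩
  · rintro ⟨⟨T', q⟩, hq, rfl⟩
    exact ⟨q, hq⟩

/-- Singular value decomposition of a map into a space of dimension `k`, with nonincreasing
singular values. The family `f` consists of the normalised nonzero vectors `A† (e i)`, completed
to an orthonormal family; this completion is where `k ≤ dim E` is needed. -/
theorem exists_svd {k n : ℕ} (hkn : k ≤ n) (hE : Module.finrank ℝ E = n)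
    (hV : Module.finrank ℝ V = k) (A : E →L[ℝ] V) :
    ∃ (e : OrthonormalBasis (Fin k) ℝ V) (f : Fin k → E) (σ : Fin k → ℝ),
      Orthonormal ℝ f ∧ Antitone σ ∧ (∀ i, 0 ≤ σ i) ∧ ∀ x, A x = ∑ i, (σ i * ⟪f i, x⟫_ℝ) • e i := by
  have hpos := ContinuousLinearMap.isPositive_self_comp_adjoint A
  have hsym : ((A ∘L adjoint A : V →L[ℝ] V) : V →ₗ[ℝ] V).IsSymmetric :=
    hpos.isSelfAdjoint.isSymmetric
  set e := hsym.eigenvectorBasis hV with he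
  set l := hsym.eigenvalues hV with hl
  have hTe : ∀ i, A (adjoint A (e i)) = l i • e i := fun i => hsym.apply_eigenvectorBasis hV i
  have hin : ∀ i j, ⟪adjoint A (e i), adjoint A (e j)⟫_ℝ = if i = j then l j else 0 := by
    intro i j
    rw [ContinuousLinearMap.adjoint_inner_left, hTe, inner_smul_right,
      orthonormal_iff_ite.mp e.orthonormal]
    simp
  have hl0 : ∀ i, 0 ≤ l i := fun i => by
    have := hin i i
    rw [if_pos rfl] at this
    exact this ▸ real_inner_self_nonneg
  let v : Fin n → E := fun j =>
    if h : (j : ℕ) < k then (Real.sqrt (l ⟨j, h⟩))⁻¹ • adjoint A (e ⟨j, h⟩) else 0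
  let s : Set (Fin n) := {j | ∃ h : (j : ℕ) < k, l ⟨j, h⟩ ≠ 0}
  have hv : Orthonormal ℝ (s.domRestrict v) := by
    rw [orthonormal_iff_ite]
    rintro ⟨i, hi, hi0⟩ ⟨j, hj, hj0⟩
    have hij : ((⟨i, hi⟩ : Fin k) = ⟨j, hj⟩) ↔ i = j := by simp [Fin.ext_iff]
    simp only [Set.domRestrict_apply, v, hi, hj, dif_pos, inner_smul_left, inner_smul_right, hin,
      conj_trivial, Subtype.mk.injEq, hij]
    split_ifs with hh
    · subst hh
      have h2 := Real.mul_self_sqrt (hl0 ⟨i, hi⟩)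
      have h3 : Real.sqrt (l ⟨i, hi⟩) ≠ 0 := fun h => hi0 (by rw [← h2, h, zero_mul])
      field_simp
      rw [sq, h2]
    · simp
  obtain ⟨b, hb⟩ := hv.exists_orthonormalBasis_extension_of_card_eq (by simpa using hE)
  have hAe : ∀ i, adjoint A (e i) = Real.sqrt (l i) • b (Fin.castLE hkn i) := by
    intro i
    by_cases h0 : l i = 0
    · have := hin i i
      rw [if_pos rfl, h0, inner_self_eq_zero] at this
      simp [this, h0]
    · rw [hb (Fin.castLE hkn i) ⟨i.2, h0⟩]
      have h3 : Real.sqrt (l i) ≠ 0 := by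
        rw [Real.sqrt_ne_zero (hl0 i)]; exact h0
      simp [v, smul_smul, h3]
  refine ⟨e, fun i => b (Fin.castLE hkn i), fun i => Real.sqrt (l i),
    b.orthonormal.comp _ (Fin.castLE_injective hkn),
    fun i j hij => Real.sqrt_le_sqrt (hsym.eigenvalues_antitone hV hij),
    fun i => Real.sqrt_nonneg _, fun x => ?_⟩
  rw [← e.sum_repr' (A x)]
  refine Finset.sum_congr rfl fun i _ => ?_
  rw [← ContinuousLinearMap.adjoint_inner_left, hAe, inner_smul_left]
  simp

theorem generic_of_svd {k : ℕ} (A : E →L[ℝ] V) (e : OrthonormalBasis (Fin k) ℝ V) (f : Fin k → E)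
    (σ : Fin k → ℝ) (hf : Orthonormal ℝ f) (hσ : Function.Injective σ) (hpos : ∀ i, 0 < σ i)
    (hA : ∀ x, A x = ∑ i, (σ i * ⟪f i, x⟫_ℝ) • e i) :
    Function.Surjective A ∧ ∀ μ : ℝ, Module.finrank ℝ
      (Module.End.eigenspace ((A ∘L adjoint A : V →L[ℝ] V) : V →ₗ[ℝ] V) μ) ≤ 1 := by
  have hAf : ∀ i, A (f i) = σ i • e i := by
    intro i
    simp [hA, orthonormal_iff_ite.mp hf]
  have heA : ∀ i x, ⟪e i, A x⟫_ℝ = σ i * ⟪f i, x⟫_ℝ := by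
    intro i x
    rw [hA, e.orthonormal.inner_right_fintype]
  have hAe : ∀ i, adjoint A (e i) = σ i • f i := by
    intro i
    refine ext_inner_right ℝ fun x => ?_
    rw [ContinuousLinearMap.adjoint_inner_left, heA, inner_smul_left]
    simp
  constructor
  · intro y
    refine ⟨∑ i, (⟪e i, y⟫_ℝ * (σ i)⁻¹) • f i, ?_⟩
    rw [map_sum]
    conv_rhs => rw [← e.sum_repr' y]
    refine Finset.sum_congr rfl fun i _ => ?_
    rw [map_smul, hAf, smul_smul, mul_assoc, inv_mul_cancel₀ (hpos i).ne', mul_one]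
  · intro μ
    have key : ∀ w ∈ Module.End.eigenspace ((A ∘L adjoint A : V →L[ℝ] V) : V →ₗ[ℝ] V) μ,
        ∀ i, σ i ^ 2 ≠ μ → ⟪e i, w⟫_ℝ = 0 := by
      intro w hw i hi
      have hw' : A (adjoint A w) = μ • w := Module.End.mem_eigenspace_iff.mp hw
      have h1 := heA i (adjoint A w)
      rw [hw', ContinuousLinearMap.adjoint_inner_right, hAf, inner_smul_left,
        inner_smul_right] at h1
      have h2 : (σ i ^ 2 - μ) * ⟪e i, w⟫_ℝ = 0 := by
        simp only [conj_trivial] at h1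
        linarith
      exact (mul_eq_zero.mp h2).resolve_left (sub_ne_zero.mpr hi)
    by_cases hμ : ∃ i, σ i ^ 2 = μ
    · obtain ⟨i, hi⟩ := hμ
      have hmem : e i ∈ Module.End.eigenspace ((A ∘L adjoint A : V →L[ℝ] V) : V →ₗ[ℝ] V) μ := by
        rw [Module.End.mem_eigenspace_iff]
        simp [hAe, hAf, smul_smul, ← hi, sq]
      refine finrank_le_one ⟨e i, hmem⟩ fun w => ⟨⟪e i, (w : V)⟫_ℝ, Subtype.ext ?_⟩
      conv_rhs => rw [← e.sum_repr' (w : V)]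
      rw [Finset.sum_eq_single i]
      · rfl
      · intro j _ hj
        rw [key w w.2 j, zero_smul]
        rw [← hi]
        exact fun h => hj (hσ ((sq_eq_sq₀ (hpos j).le (hpos i).le).mp h))
      · simp
    · push Not at hμ
      have hw0 : ∀ w : Module.End.eigenspace ((A ∘L adjoint A : V →L[ℝ] V) : V →ₗ[ℝ] V) μ,
          (w : V) = 0 := by
        intro w
        rw [← e.sum_repr' (w : V)]
        exact Finset.sum_eq_zero fun i _ => by rw [key w w.2 i (hμ i), zero_smul]
      refine finrank_le_one 0 fun w => ⟨0, ?_⟩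
      rw [smul_zero]
      exact (Subtype.ext (hw0 w)).symm

end GenericFrames

/-- For `n ≥ k ≥ 1`, the set of generic frames—surjective continuous linear maps
`A : EuclideanSpace ℝ (Fin n) → V` whose frame operator `A ∘ A†` has pairwise distinct
eigenvalues, i.e., every eigenspace of `A ∘ A†` has dimension at most 1—is open and dense
in the space of all continuous linear maps with the operator-norm topology. -/
theorem generic_frames_open_dense {n k : ℕ} (hnk : k ≤ n) (hk : 1 ≤ k) {V : Type*}
    [NormedAddCommGroup V] [InnerProductSpace ℝ V] [FiniteDimensional ℝ V]
    (hV : Module.finrank ℝ V = k) :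
    IsOpen {A : EuclideanSpace ℝ (Fin n) →L[ℝ] V | Function.Surjective A ∧
        ∀ μ : ℝ, Module.finrank ℝ
          (Module.End.eigenspace
            ((A ∘L ContinuousLinearMap.adjoint A : V →L[ℝ] V) : V →ₗ[ℝ] V) μ) ≤ 1} ∧
      Dense {A : EuclideanSpace ℝ (Fin n) →L[ℝ] V | Function.Surjective A ∧
        ∀ μ : ℝ, Module.finrank ℝ
          (Module.End.eigenspace
            ((A ∘L ContinuousLinearMap.adjoint A : V →L[ℝ] V) : V →ₗ[ℝ] V) μ) ≤ 1} := by
  constructor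
  · exact isOpen_surjective.inter (isOpen_simple_spectrum.preimage (by fun_prop))
  · intro A
    obtain ⟨e, f, σ, hf, hanti, hσ0, hA⟩ := exists_svd hnk (by simp) hV A
    let B : EuclideanSpace ℝ (Fin n) →L[ℝ] V :=
      ∑ i : Fin k, ((k : ℝ) - (i : ℕ)) • (innerSL ℝ (f i)).smulRight (e i)
    have hlim : Filter.Tendsto (fun t : ℝ => A + t • B) (𝓝[>] 0) (𝓝 A) := by
      have hc : Continuous fun t : ℝ => A + t • B := by fun_prop
      have h0 := hc.tendsto 0
      simp only [zero_smul, add_zero] at h0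
      exact h0.mono_left nhdsWithin_le_nhds
    refine mem_closure_of_tendsto hlim ?_
    filter_upwards [self_mem_nhdsWithin] with t ht
    have ht : 0 < t := ht
    have hgap : ∀ i : Fin k, 0 < (k : ℝ) - (i : ℕ) := fun i =>
      sub_pos.mpr (by exact_mod_cast i.2)
    have hstrict : StrictAnti fun i : Fin k => σ i + t * ((k : ℝ) - (i : ℕ)) := by
      intro i j hij
      have hij' : ((i : ℕ) : ℝ) < ((j : ℕ) : ℝ) := by exact_mod_cast hij
      have h1 := hanti hij.le
      have h2 := mul_lt_mul_of_pos_left hij' ht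
      dsimp only
      linarith
    refine generic_of_svd (A + t • B) e f _ hf hstrict.injective
      (fun i => add_pos_of_nonneg_of_pos (hσ0 i) (mul_pos ht (hgap i))) fun x => ?_
    simp only [add_apply, smul_apply, hA x, B,
      sum_apply, ContinuousLinearMap.smulRight_apply, innerSL_apply_apply,
      Finset.smul_sum, smul_smul, ← Finset.sum_add_distrib, ← add_smul]
    refine Finset.sum_congr rfl fun i _ => ?_
    congr 1
    ring
end
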